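/- arXiv:2004.05929 — 2 statements merged into one kernel-verified Lean document; each statement's English description precedes it below -/
import Mathlib

section
/- Let γ₁, γ₂ be real numbers and let ψ be an approximation function with ∑_q (ψ(q)·φ(q)/q)² = ∞, where φ is Euler's totient function. Then the set of points (x₁,x₂) ∈ [0,1]² such that max{‖q x₁ − γ₁‖, ‖q x₂ − γ₂‖} ≤ ψ(q) for infinitely many positive integers q has two-dimensional Lebesgue measure one. -/
open MeasureTheory Filter Real

/-- Distance from a real number to the nearest integer. -/
noncomputable def dnint (x : ℝ) : ℝ := |x - round x|

/- Weight the `q`-th approximation set `E q` of the `m`-torus by `(φ(q)/q)^m`. On the circle,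
averaging over the translations by `k/q` gives `|A q ∩ A r| ≤ |A q| (|A r| + gcd(q,r)/q)`. For
`m ≥ 2` the resulting overlap bound on the torus and the identity `∑_{d ∣ q} φ(d) = q` show that
the weighted counting functions, divided by their means, are bounded in `L²`. Since `E q` is
invariant under translation by `1/q` in each coordinate, its indicator is orthogonal to any fixed
nontrivial character once `q` is large, so these normalized functions converge weakly to `1`.
Pairing them with the indicator of the set of points that lie in no `E q` with `q ≥ N` gives in
the limit both the measure of that set and `0`. -/

open scoped Topology Finset

section Hilbert

lemma tendsto_inv_one_add_sum_mul_sum {𝕜 : Type*} [RCLike 𝕜] {p : ℕ → ℝ} {a : ℕ → 𝕜} {c : 𝕜}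
    (hp : 0 ≤ p) (hdiv : Tendsto (fun n ↦ ∑ q ∈ Finset.range n, p q) atTop atTop)
    (ha : ∀ᶠ q in atTop, a q = p q * c) :
    Tendsto (fun n ↦ (((1 + ∑ q ∈ Finset.range n, p q)⁻¹ : ℝ) : 𝕜) * ∑ q ∈ Finset.range n, a q)
      atTop (𝓝 c) := by
  set S : ℕ → ℝ := fun n ↦ ∑ q ∈ Finset.range n, p q
  have hS : ∀ n, 0 < 1 + S n := fun n ↦
    add_pos_of_pos_of_nonneg one_pos (Finset.sum_nonneg fun q _ ↦ hp q)
  obtain ⟨N, hN⟩ := eventually_atTop.mp ha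
  set D : 𝕜 := ∑ q ∈ Finset.range N, (a q - p q * c) - c
  have hinv : Tendsto (fun n ↦ (1 + S n)⁻¹) atTop (𝓝 0) :=
    tendsto_inv_atTop_zero.comp (tendsto_atTop_add_const_left _ 1 hdiv)
  have hlim : Tendsto (fun n ↦ c + (((1 + S n)⁻¹ : ℝ) : 𝕜) * D) atTop (𝓝 c) := by
    simpa using (((RCLike.continuous_ofReal (K := 𝕜)).tendsto 0).comp hinv).mul_const D
      |>.const_add c
  refine hlim.congr' ?_
  filter_upwards [eventually_ge_atTop N] with n hn
  have hD : D = ∑ q ∈ Finset.range n, a q - (1 + S n : ℝ) * c := by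
    have hext : ∑ q ∈ Finset.range N, (a q - p q * c) = ∑ q ∈ Finset.range n, (a q - p q * c) :=
      Finset.sum_subset (Finset.range_mono hn) fun q _ hq ↦
        sub_eq_zero.mpr (hN q (by simpa using hq))
    simp only [D, hext, Finset.sum_sub_distrib, ← Finset.sum_mul, S]
    push_cast
    ring
  have hne : ((1 + S n : ℝ) : 𝕜) ≠ 0 := RCLike.ofReal_ne_zero.mpr (hS n).ne'
  rw [hD, RCLike.ofReal_inv]
  field_simp
  ring

variable {𝕜 H : Type*} [RCLike 𝕜] [NormedAddCommGroup H] [InnerProductSpace 𝕜 H]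

lemma tendsto_inner_of_span_dense {ι : Type*} {l : Filter ι} {G : ι → H} {K : ℝ}
    (hG : ∀ i, ‖G i‖ ≤ K) {s : Set H} (hs : (Submodule.span 𝕜 s).topologicalClosure = ⊤) {y : H}
    (h : ∀ e ∈ s, Tendsto (fun i ↦ inner 𝕜 (G i) e) l (𝓝 (inner 𝕜 y e))) (u : H) :
    Tendsto (fun i ↦ inner 𝕜 (G i) u) l (𝓝 (inner 𝕜 y u)) := by
  have hequi : Equicontinuous fun (i : ι) (u : H) ↦ inner 𝕜 (G i) u :=
    (LipschitzWith.uniformEquicontinuous _ K.toNNReal fun i ↦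
      (innerSL 𝕜 (G i)).lipschitz.weaken <| by
        rw [← norm_toNNReal, innerSL_apply_norm]
        exact Real.toNNReal_le_toNNReal (hG i)).equicontinuous
  have hclosed : IsClosed {u | Tendsto (fun i ↦ inner 𝕜 (G i) u) l (𝓝 (inner 𝕜 y u))} :=
    hequi.isClosed_setOfPred_tendsto (innerSL 𝕜 y).continuous
  have hspan : ∀ e ∈ Submodule.span 𝕜 s,
      Tendsto (fun i ↦ inner 𝕜 (G i) e) l (𝓝 (inner 𝕜 y e)) := by
    intro e he
    induction he using Submodule.span_induction with
    | mem x hx => exact h x hx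
    | zero => simpa only [inner_zero_right] using tendsto_const_nhds
    | add x y _ _ hx hy => simpa only [inner_add_right] using hx.add hy
    | smul a x _ hx => simpa only [inner_smul_right] using hx.const_mul a
  have hu : u ∈ closure (Submodule.span 𝕜 s : Set H) := by
    simp [← Submodule.topologicalClosure_coe, hs]
  exact closure_minimal hspan hclosed hu

lemma inner_eq_zero_of_eventually_inner_eq_zero {v : ℕ → H} {p : ℕ → ℝ} {y : H} {K : ℝ}
    (hp : 0 ≤ p) (hdiv : Tendsto (fun n ↦ ∑ q ∈ Finset.range n, p q) atTop atTop)
    (hK : ∀ n, ‖∑ q ∈ Finset.range n, v q‖ ≤ K * (1 + ∑ q ∈ Finset.range n, p q))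
    {s : Set H} (hs : (Submodule.span 𝕜 s).topologicalClosure = ⊤)
    (hsv : ∀ e ∈ s, ∀ᶠ q in atTop, inner 𝕜 (v q) e = p q * inner 𝕜 y e)
    {u : H} (hu : ∀ᶠ q in atTop, inner 𝕜 (v q) u = 0) : inner 𝕜 y u = 0 := by
  set S : ℕ → ℝ := fun n ↦ ∑ q ∈ Finset.range n, p q
  have hS : ∀ n, 0 < 1 + S n := fun n ↦
    add_pos_of_pos_of_nonneg one_pos (Finset.sum_nonneg fun q _ ↦ hp q)
  set G : ℕ → H := fun n ↦ (((1 + S n)⁻¹ : ℝ) : 𝕜) • ∑ q ∈ Finset.range n, v q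
  have hG : ∀ n, ‖G n‖ ≤ K := fun n ↦ by
    rw [norm_smul, RCLike.norm_ofReal, abs_of_pos (inv_pos.mpr (hS n)), inv_mul_le_iff₀ (hS n),
      mul_comm]
    exact hK n
  have hGlim : ∀ (e : H) (c : 𝕜), (∀ᶠ q in atTop, inner 𝕜 (v q) e = p q * c) →
      Tendsto (fun n ↦ inner 𝕜 (G n) e) atTop (𝓝 c) := fun e c h ↦ by
    simpa only [G, inner_smul_left, RCLike.conj_ofReal, sum_inner] using
      tendsto_inv_one_add_sum_mul_sum hp hdiv h
  refine tendsto_nhds_unique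
    (tendsto_inner_of_span_dense hG hs (fun e he ↦ hGlim e _ (hsv e he)) u) (hGlim u 0 ?_)
  simpa only [mul_zero] using hu

end Hilbert

section BorelCantelli

variable {𝕜 X : Type*} [RCLike 𝕜] [MeasurableSpace X] {μ : Measure X} [IsFiniteMeasure μ]
  {E : ℕ → Set X} {w : ℕ → ℝ}

lemma norm_sum_smul_indicatorConstLp_sq (hE : ∀ q, MeasurableSet (E q)) (w : ℕ → ℝ)
    (s : Finset ℕ) :
    ‖∑ q ∈ s, (w q : 𝕜) • indicatorConstLp 2 (hE q) (measure_ne_top μ _) (1 : 𝕜)‖ ^ 2 =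
      ∑ q ∈ s, ∑ r ∈ s, w q * w r * μ.real (E q ∩ E r) := by
  rw [← inner_self_eq_norm_sq (𝕜 := 𝕜), sum_inner]
  simp_rw [inner_sum, inner_smul_left, inner_smul_right, RCLike.conj_ofReal,
    L2.inner_indicatorConstLp_one_indicatorConstLp_one, ← RCLike.ofReal_mul, ← RCLike.ofReal_sum,
    RCLike.ofReal_re, mul_assoc]

theorem ae_frequently_mem_of_sum_inter_le (hE : ∀ q, MeasurableSet (E q)) (hw : 0 ≤ w)
    (hdiv : Tendsto (fun n ↦ ∑ q ∈ Finset.range n, w q * μ.real (E q)) atTop atTop) {C : ℝ}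
    (hinter : ∀ n, ∑ q ∈ Finset.range n, ∑ r ∈ Finset.range n, w q * w r * μ.real (E q ∩ E r) ≤
      C * (1 + ∑ q ∈ Finset.range n, w q * μ.real (E q)) ^ 2)
    {s : Set (Lp 𝕜 2 μ)} (hs : (Submodule.span 𝕜 s).topologicalClosure = ⊤)
    (hindep : ∀ f ∈ s, ∀ᶠ q in atTop, ∫ x in E q, f x ∂μ = μ.real (E q) * ∫ x, f x ∂μ) :
    ∀ᵐ x ∂μ, ∃ᶠ q in atTop, x ∈ E q := by
  have hp : 0 ≤ fun q ↦ w q * μ.real (E q) := fun q ↦ mul_nonneg (hw q) measureReal_nonneg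
  have hK : ∀ n,
      ‖∑ q ∈ Finset.range n, (w q : 𝕜) • indicatorConstLp 2 (hE q) (measure_ne_top μ _) (1 : 𝕜)‖ ≤
        √C * (1 + ∑ q ∈ Finset.range n, w q * μ.real (E q)) := fun n ↦ by
    have hS : 0 ≤ 1 + ∑ q ∈ Finset.range n, w q * μ.real (E q) :=
      add_nonneg zero_le_one (Finset.sum_nonneg fun q _ ↦ hp q)
    rw [← Real.sqrt_sq (norm_nonneg _), norm_sum_smul_indicatorConstLp_sq hE]
    refine (Real.sqrt_le_sqrt (hinter n)).trans_eq ?_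
    rw [Real.sqrt_mul' _ (sq_nonneg _), Real.sqrt_sq hS]
  have hnull : ∀ N, μ (⋂ q ≥ N, (E q)ᶜ) = 0 := fun N ↦ by
    have hB : MeasurableSet (⋂ q ≥ N, (E q)ᶜ) :=
      .iInter fun q ↦ .iInter fun _ ↦ (hE q).compl
    have hu := inner_eq_zero_of_eventually_inner_eq_zero (𝕜 := 𝕜) hp hdiv hK hs
      (y := indicatorConstLp 2 .univ (measure_ne_top μ _) 1)
      (u := indicatorConstLp 2 hB (measure_ne_top μ _) 1)
      (fun f hf ↦ (hindep f hf).mono fun q hq ↦ by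
        rw [inner_smul_left, RCLike.conj_ofReal, L2.inner_indicatorConstLp_one,
          L2.inner_indicatorConstLp_one, setIntegral_univ, hq, RCLike.ofReal_mul, mul_assoc])
      ((eventually_ge_atTop N).mono fun q hq ↦ by
        have hdisj : E q ∩ ⋂ q ≥ N, (E q)ᶜ = ∅ := Set.disjoint_iff_inter_eq_empty.mp <|
          Set.disjoint_left.mpr fun x hx hxB ↦ Set.mem_iInter₂.mp hxB q hq hx
        rw [inner_smul_left, L2.inner_indicatorConstLp_one_indicatorConstLp_one, hdisj]
        simp)
    rwa [L2.inner_indicatorConstLp_one_indicatorConstLp_one, Set.univ_inter,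
      RCLike.ofReal_eq_zero, measureReal_eq_zero_iff] at hu
  refine measure_mono_null (fun x hx ↦ ?_) (measure_iUnion_null hnull)
  obtain ⟨N, hN⟩ := eventually_atTop.mp (not_frequently.mp hx)
  exact Set.mem_iUnion.mpr ⟨N, Set.mem_iInter₂.mpr hN⟩

end BorelCantelli

section QuasiIndependence

lemma sum_sum_le_of_le_mul_add {m κ : ℕ → ℕ → ℝ} {a : ℕ → ℝ} {C : ℝ} (hC : 0 ≤ C) (ha : 0 ≤ a)
    (hκ : ∀ q r, 0 ≤ κ q r) (hsymm : ∀ q r, m q r = m r q)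
    (hm : ∀ q r, r ≤ q → m q r ≤ C * a q * (a r + κ q r))
    (hκsum : ∀ q, ∑ r ∈ Finset.range (q + 1), κ q r ≤ 1) (n : ℕ) :
    ∑ q ∈ Finset.range n, ∑ r ∈ Finset.range n, m q r ≤
      2 * C * (1 + ∑ q ∈ Finset.range n, a q) ^ 2 := by
  set S := ∑ q ∈ Finset.range n, a q
  have hS : 0 ≤ S := Finset.sum_nonneg fun q _ ↦ ha q
  set b : ℕ → ℕ → ℝ := fun q r ↦ if r ≤ q then C * a q * (a r + κ q r) else 0
  have hb : ∀ q r, 0 ≤ b q r := fun q r ↦ by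
    have := ha q; have := ha r; have := hκ q r
    simp only [b, Pi.zero_apply] at *
    split_ifs <;> positivity
  have hmb : ∀ q r, m q r ≤ b q r + b r q := fun q r ↦ by
    rcases le_total r q with h | h
    · exact (hm q r h).trans (by simpa only [b, if_pos h] using le_add_of_nonneg_right (hb r q))
    · rw [hsymm]
      exact (hm r q h).trans (by simpa only [b, if_pos h] using le_add_of_nonneg_left (hb q r))
  have hrow : ∀ q ∈ Finset.range n, ∑ r ∈ Finset.range n, b q r ≤ C * a q * (S + 1) := by
    intro q hq
    have hfilter : {r ∈ Finset.range n | r ≤ q} = Finset.range (q + 1) := by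
      ext r
      simp only [Finset.mem_filter, Finset.mem_range] at hq ⊢
      lia
    have hle : ∑ r ∈ Finset.range (q + 1), a r ≤ S :=
      Finset.sum_le_sum_of_subset_of_nonneg (Finset.range_mono (Finset.mem_range.mp hq))
        fun r _ _ ↦ ha r
    rw [← Finset.sum_filter, hfilter, ← Finset.mul_sum, Finset.sum_add_distrib]
    exact mul_le_mul_of_nonneg_left (add_le_add hle (hκsum q)) (mul_nonneg hC (ha q))
  calc ∑ q ∈ Finset.range n, ∑ r ∈ Finset.range n, m q r
      ≤ ∑ q ∈ Finset.range n, ∑ r ∈ Finset.range n, (b q r + b r q) :=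
        Finset.sum_le_sum fun q _ ↦ Finset.sum_le_sum fun r _ ↦ hmb q r
    _ = 2 * ∑ q ∈ Finset.range n, ∑ r ∈ Finset.range n, b q r := by
        simp_rw [Finset.sum_add_distrib]
        rw [Finset.sum_comm (f := fun q r ↦ b r q), two_mul]
    _ ≤ 2 * ∑ q ∈ Finset.range n, C * a q * (S + 1) := by
        gcongr with q hq
        exact hrow q hq
    _ = 2 * C * (S * (S + 1)) := by
        rw [← Finset.sum_mul, ← Finset.mul_sum]
        ring
    _ ≤ 2 * C * (1 + S) ^ 2 := by
        gcongr
        nlinarith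

end QuasiIndependence

section Totient

lemma totient_mul_le_totient_mul (d e : ℕ) : (d * e).totient ≤ d.totient * e := by
  induction e using Nat.recOnMul generalizing d with
  | zero => simp
  | one => simp
  | prime p hp =>
    rw [mul_comm d p, mul_comm _ p]
    by_cases hpd : p ∣ d
    · exact (Nat.totient_mul_of_prime_of_dvd hp hpd).le
    · rw [Nat.totient_mul_of_prime_of_not_dvd hp hpd]
      exact Nat.mul_le_mul_right _ (Nat.sub_le _ _)
  | mul a b ha hb =>
    calc (d * (a * b)).totient = (d * a * b).totient := by rw [mul_assoc]
      _ ≤ (d * a).totient * b := hb _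
      _ ≤ d.totient * a * b := Nat.mul_le_mul_right _ (ha _)
      _ = d.totient * (a * b) := mul_assoc _ _ _

lemma totient_div_self_le_one (r : ℕ) : (r.totient : ℝ) / r ≤ 1 :=
  div_le_one_of_le₀ (Nat.cast_le.mpr r.totient_le) r.cast_nonneg

lemma totient_div_self_le_of_dvd {d r : ℕ} (hr : r ≠ 0) (hdr : d ∣ r) :
    (r.totient : ℝ) / r ≤ d.totient / d := by
  obtain ⟨e, rfl⟩ := hdr
  obtain ⟨hd, he⟩ := mul_ne_zero_iff.mp hr
  have hle : ((d * e).totient : ℝ) ≤ d.totient * e := mod_cast totient_mul_le_totient_mul d e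
  rw [div_le_div_iff₀ (by positivity) (by positivity)]
  calc ((d * e).totient : ℝ) * d ≤ d.totient * e * d := by gcongr
    _ = d.totient * (d * e : ℕ) := by push_cast; ring

lemma card_filter_gcd_eq_le (q d : ℕ) : (#{r ∈ Finset.Ioc 0 q | q.gcd r = d} : ℝ) ≤ q / d := by
  refine le_trans (Nat.cast_le.mpr ?_) (Nat.cast_div_le (m := q) (n := d))
  rw [← Nat.Ioc_filter_dvd_card_eq_div q d]
  exact Finset.card_le_card <| Finset.monotone_filter_right _ fun r _ hr ↦ hr ▸ q.gcd_dvd_right r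

lemma sum_totient_mul_gcd_sq_le_one (q : ℕ) :
    ∑ r ∈ Finset.range (q + 1), (r.totient : ℝ) / r * ((q.gcd r : ℝ) / q) ^ 2 ≤ 1 := by
  rcases eq_or_ne q 0 with rfl | hq
  · simp
  have hrange : ∑ r ∈ Finset.range (q + 1), (r.totient : ℝ) / r * ((q.gcd r : ℝ) / q) ^ 2 =
      ∑ r ∈ Finset.Ioc 0 q, (r.totient : ℝ) / r * ((q.gcd r : ℝ) / q) ^ 2 := by
    refine (Finset.sum_subset (fun r hr ↦ ?_) fun r hr hr0 ↦ ?_).symm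
    · simp only [Finset.mem_Ioc, Finset.mem_range] at hr ⊢
      lia
    · obtain rfl : r = 0 := by
        simp only [Finset.mem_Ioc, Finset.mem_range] at hr hr0
        lia
      simp
  have hmaps : ∀ r ∈ Finset.Ioc 0 q, q.gcd r ∈ q.divisors := fun r _ ↦
    Nat.mem_divisors.mpr ⟨q.gcd_dvd_left r, hq⟩
  rw [hrange, ← Finset.sum_fiberwise_of_maps_to hmaps]
  calc ∑ d ∈ q.divisors, ∑ r ∈ Finset.Ioc 0 q with q.gcd r = d,
        (r.totient : ℝ) / r * ((q.gcd r : ℝ) / q) ^ 2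
      ≤ ∑ d ∈ q.divisors, ∑ r ∈ Finset.Ioc 0 q with q.gcd r = d,
        (d.totient : ℝ) / d * ((d : ℝ) / q) ^ 2 := by
        refine Finset.sum_le_sum fun d _ ↦ Finset.sum_le_sum fun r hr ↦ ?_
        obtain ⟨hrq, rfl⟩ := Finset.mem_filter.mp hr
        gcongr ?_ * _
        exact totient_div_self_le_of_dvd (Finset.mem_Ioc.mp hrq).1.ne' (q.gcd_dvd_right r)
    _ ≤ ∑ d ∈ q.divisors, (q : ℝ) / d * ((d.totient : ℝ) / d * ((d : ℝ) / q) ^ 2) := by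
        simp_rw [Finset.sum_const, nsmul_eq_mul]
        gcongr with d
        exact card_filter_gcd_eq_le q d
    _ = ∑ d ∈ q.divisors, (d.totient : ℝ) / q := by
        refine Finset.sum_congr rfl fun d hd ↦ ?_
        have hd0 : d ≠ 0 := (Nat.pos_of_mem_divisors hd).ne'
        field_simp
    _ = 1 := by
        rw [← Finset.sum_div, ← Nat.cast_sum, Nat.sum_totient, div_self (Nat.cast_ne_zero.mpr hq)]

end Totient

section ApproxSet

variable {G : Type*} [PseudoMetricSpace G]

/-- The points whose `q`-th multiple lies within `a` of the target `g`. On the circle and, with its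
sup metric, on the torus, this is the `q`-th set of inhomogeneous Diophantine approximation. -/
def approxSet [AddMonoid G] (q : ℕ) (g : G) (a : ℝ) : Set G :=
  (q • ·) ⁻¹' Metric.closedBall g a

lemma mem_approxSet [AddMonoid G] {q : ℕ} {g x : G} {a : ℝ} :
    x ∈ approxSet q g a ↔ dist (q • x) g ≤ a :=
  Iff.rfl

lemma measurableSet_approxSet [AddMonoid G] [ContinuousAdd G] [MeasurableSpace G]
    [OpensMeasurableSpace G] (q : ℕ) (g : G) (a : ℝ) : MeasurableSet (approxSet q g a) :=
  (Metric.isClosed_closedBall.preimage (continuous_nsmul q)).measurableSet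

lemma add_mem_approxSet_iff [AddCommMonoid G] {q : ℕ} {t : G} (ht : q • t = 0) (g x : G) (a : ℝ) :
    x + t ∈ approxSet q g a ↔ x ∈ approxSet q g a := by
  rw [mem_approxSet, mem_approxSet, nsmul_add, ht, add_zero]

lemma approxSet_mul [AddMonoid G] (d q : ℕ) (g : G) (a : ℝ) :
    approxSet (d * q) g a = (d • ·) ⁻¹' approxSet q g a := by
  ext x
  rw [Set.mem_preimage, mem_approxSet, mem_approxSet, mul_nsmul]

lemma approxSet_pi {ι : Type*} [Fintype ι] [Nonempty ι] {M : ι → Type*}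
    [∀ i, PseudoMetricSpace (M i)] [∀ i, AddMonoid (M i)] (q : ℕ) (g : ∀ i, M i) (a : ℝ) :
    approxSet q g a = Set.univ.pi fun i ↦ approxSet q (g i) a := by
  ext x
  simp only [mem_approxSet, dist_pi_le_iff', Set.mem_univ_pi, Pi.smul_apply]

end ApproxSet

section Translation

variable {G : Type*} [AddGroup G] [MeasurableSpace G] [MeasurableAdd G] {μ : Measure G}
  [μ.IsAddRightInvariant]

lemma card_mul_measureReal_inter_le [IsFiniteMeasure μ] {A B : Set G} (hB : MeasurableSet B)
    {κ : Type*} {T : Finset κ} {t : κ → G} (hA : ∀ k ∈ T, ∀ x, x + t k ∈ A ↔ x ∈ A) {N : ℝ}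
    [DecidablePred (· ∈ B)] (hN : ∀ x, (#{k ∈ T | x + t k ∈ B} : ℝ) ≤ N) :
    #T * μ.real (A ∩ B) ≤ N * μ.real A := by
  have hBt : ∀ k, MeasurableSet ((· + t k) ⁻¹' B) := fun k ↦ measurable_add_const (t k) hB
  have hint : ∀ k ∈ T, IntegrableOn (((· + t k) ⁻¹' B).indicator (1 : G → ℝ)) A μ := fun k _ ↦
    (integrable_const (1 : ℝ)).indicator (hBt k)
  have hinter : ∀ k ∈ T,
      μ.real (A ∩ B) = ∫ x in A, ((· + t k) ⁻¹' B).indicator (1 : G → ℝ) x ∂μ := fun k hk ↦ by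
    have hpre : (· + t k) ⁻¹' (A ∩ B) = (· + t k) ⁻¹' B ∩ A := by
      ext x
      simp only [Set.mem_preimage, Set.mem_inter_iff, hA k hk x, and_comm]
    rw [integral_indicator_one (hBt k), measureReal_restrict_apply (hBt k), ← hpre,
      measureReal_def, measureReal_def, measure_preimage_add_right]
  calc #T * μ.real (A ∩ B) = ∫ x in A, ∑ k ∈ T, ((· + t k) ⁻¹' B).indicator 1 x ∂μ := by
        rw [integral_finsetSum _ hint, ← Finset.sum_congr rfl hinter, Finset.sum_const,
          nsmul_eq_mul]
    _ ≤ ∫ _ in A, N ∂μ := by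
        refine integral_mono (integrable_finsetSum _ hint) (integrable_const N) fun x ↦
          le_of_eq_of_le ?_ (hN x)
        rw [Finset.natCast_card_filter]
        refine Finset.sum_congr rfl fun k _ ↦ ?_
        by_cases hk : x + t k ∈ B <;> simp [hk]
    _ = N * μ.real A := by rw [setIntegral_const, smul_eq_mul, mul_comm]

lemma setIntegral_eq_zero_of_add_right {E : Set G} {s : G} (hE : ∀ x, x + s ∈ E ↔ x ∈ E)
    {f : G → ℂ} {c : ℂ} (hc : c ≠ 1) (hf : ∀ x, f (x + s) = c * f x) :
    ∫ x in E, f x ∂μ = 0 := by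
  have hpre : (· + s) ⁻¹' E = E := Set.ext hE
  have hshift : ∫ x in E, f x ∂μ = c * ∫ x in E, f x ∂μ := calc
    ∫ x in E, f x ∂μ = ∫ x in E, f (x + s) ∂μ := by
        conv_rhs => rw [← hpre]
        exact ((measurePreserving_add_right μ s).setIntegral_preimage_emb
          (measurableEmbedding_addRight s) f E).symm
    _ = c * ∫ x in E, f x ∂μ := by simp_rw [hf, integral_const_mul]
  exact (mul_left_eq_self₀.mp hshift.symm).resolve_left hc

end Translation

section Circle

lemma measurePreserving_nsmul {q : ℕ} (hq : q ≠ 0) :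
    MeasurePreserving (q • · : UnitAddCircle → UnitAddCircle) := by
  simpa only [natCast_zsmul] using
    Measure.measurePreserving_zsmul volume (Int.natCast_ne_zero.mpr hq)

lemma measureReal_approxSet {q : ℕ} (hq : q ≠ 0) (g : UnitAddCircle) {a : ℝ} (ha : 0 ≤ a) :
    volume.real (approxSet q g a) = min 1 (2 * a) := by
  rw [measureReal_def, approxSet, (measurePreserving_nsmul hq).measure_preimage
    Metric.isClosed_closedBall.measurableSet.nullMeasurableSet, AddCircle.volume_closedBall,
    ENNReal.toReal_ofReal (by positivity)]

lemma card_le_of_injOn_of_mem_Icc {α : Type*} {s : Finset α} {f : α → ℤ} (hf : Set.InjOn f s)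
    {x L : ℝ} (hL : 0 ≤ L) (hs : ∀ k ∈ s, (f k : ℝ) ∈ Set.Icc x (x + L)) : (#s : ℝ) ≤ L + 1 := by
  have hcard : #s ≤ #(Finset.Icc ⌈x⌉ ⌊x + L⌋) := Finset.card_le_card_of_injOn f (fun k hk ↦ by
    simpa only [Finset.coe_Icc, Set.mem_Icc, Int.ceil_le, Int.le_floor] using hs k hk) hf
  calc (#s : ℝ) ≤ ((⌊x + L⌋ + 1 - ⌈x⌉).toNat : ℝ) := mod_cast (Int.card_Icc _ _) ▸ hcard
    _ = max ((⌊x + L⌋ : ℝ) + 1 - ⌈x⌉) 0 := by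
        rw [← Int.cast_natCast, Int.toNat_eq_max]
        push_cast
        rfl
    _ ≤ L + 1 := max_le (by linarith [Int.floor_le (x + L), Int.le_ceil x]) (by linarith)

lemma card_filter_norm_add_nsmul_le {q r : ℕ} (hq : q ≠ 0) (hqr : q.Coprime r) (y : UnitAddCircle)
    {b : ℝ} (hb : 0 ≤ b) :
    (#{k ∈ Finset.range q | ‖y + r • (((k : ℕ) / q : ℝ) : UnitAddCircle)‖ ≤ b} : ℝ) ≤
      2 * b * q + 1 := by
  induction y using QuotientAddGroup.induction_on with
  | H y =>
  set z : ℕ → ℝ := fun k ↦ y + r * (k / q : ℝ)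
  set f : ℕ → ℤ := fun k ↦ r * k - q * round (z k)
  have hf : ∀ k, (f k : ℝ) = q * (z k - round (z k)) - q * y := fun k ↦ by
    simp only [f, z]
    push_cast
    field_simp
    ring
  -- `f` is injective because `f k ≡ r * k` modulo `q`, with `r` invertible.
  refine card_le_of_injOn_of_mem_Icc (f := f) (x := -(q * y) - q * b) ?_ (by positivity) ?_
  · intro k hk l hl hkl
    have hdvd : (q : ℤ) ∣ r * ((k : ℤ) - l) := ⟨round (z k) - round (z l), by
      simp only [f] at hkl
      linear_combination hkl⟩
    have hzero : (k : ℤ) - l = 0 := by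
      refine Int.eq_zero_of_abs_lt_dvd
        ((Nat.isCoprime_iff_coprime.mpr hqr).dvd_of_dvd_mul_left hdvd) ?_
      simp only [Finset.coe_filter, Finset.mem_range, Set.mem_ofPred_eq] at hk hl
      grind
    lia
  · intro k hk
    have hnorm : |z k - round (z k)| ≤ b := by
      rw [← UnitAddCircle.norm_eq]
      simpa [z] using (Finset.mem_filter.mp hk).2
    have hmul : |q * (z k - round (z k))| ≤ q * b := by
      rw [abs_mul, Nat.abs_cast]
      gcongr
    rw [hf]
    constructor <;> linarith [abs_le.mp hmul]

lemma measureReal_approxSet_inter_le_of_coprime {q r : ℕ} (hq : q ≠ 0) (hqr : q.Coprime r)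
    (g h : UnitAddCircle) (a : ℝ) {b : ℝ} (hb : 0 ≤ b) :
    volume.real (approxSet q g a ∩ approxSet r h b) ≤
      volume.real (approxSet q g a) * (min 1 (2 * b) + 1 / q) := by
  classical
  set t : ℕ → UnitAddCircle := fun k ↦ ((k / q : ℝ) : UnitAddCircle)
  have hA : ∀ k ∈ Finset.range q, ∀ x,
      x + t k ∈ approxSet q g a ↔ x ∈ approxSet q g a := fun k _ x ↦ by
    refine add_mem_approxSet_iff ?_ g x a
    rw [← AddCircle.coe_nsmul, nsmul_eq_mul, mul_div_cancel₀ _ (Nat.cast_ne_zero.mpr hq)]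
    exact (AddCircle.coe_eq_zero_iff 1).mpr ⟨k, by simp⟩
  have hcount : ∀ x,
      (#{k ∈ Finset.range q | x + t k ∈ approxSet r h b} : ℝ) ≤ 2 * b * q + 1 := fun x ↦ by
    refine le_of_eq_of_le ?_ (card_filter_norm_add_nsmul_le hq hqr (r • x - h) hb)
    simp_rw [mem_approxSet, dist_eq_norm, nsmul_add, add_sub_right_comm, t]
  have hcard : q * volume.real (approxSet q g a ∩ approxSet r h b) ≤
      (2 * b * q + 1) * volume.real (approxSet q g a) := by
    simpa only [Finset.card_range] using
      card_mul_measureReal_inter_le (measurableSet_approxSet r h b) hA hcount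
  rcases le_total (2 * b) 1 with hb1 | hb1
  · rw [min_eq_right hb1]
    field_simp
    linarith
  · rw [min_eq_left hb1]
    exact (measureReal_mono Set.inter_subset_left).trans
      (le_mul_of_one_le_right measureReal_nonneg (le_add_of_nonneg_right (by positivity)))

lemma measureReal_approxSet_inter_le {q : ℕ} (hq : q ≠ 0) (r : ℕ) (g h : UnitAddCircle) (a : ℝ)
    {b : ℝ} (hb : 0 ≤ b) :
    volume.real (approxSet q g a ∩ approxSet r h b) ≤
      volume.real (approxSet q g a) * (min 1 (2 * b) + (q.gcd r : ℝ) / q) := by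
  obtain ⟨q', r', hqr, hq', hr'⟩ := Nat.exists_coprime q r
  set d := q.gcd r
  obtain ⟨hq'0, hd0⟩ := mul_ne_zero_iff.mp (hq' ▸ hq)
  have hA : approxSet q g a = (d • ·) ⁻¹' approxSet q' g a := by rw [hq', mul_comm, approxSet_mul]
  have hB : approxSet r h b = (d • ·) ⁻¹' approxSet r' h b := by rw [hr', mul_comm, approxSet_mul]
  have hAm := measurableSet_approxSet q' g a
  have hABm := hAm.inter (measurableSet_approxSet r' h b)
  have hdq : (d : ℝ) / q = 1 / q' := by
    rw [hq', Nat.cast_mul]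
    field_simp
  rw [hA, hB, ← Set.preimage_inter,
    (measurePreserving_nsmul hd0).measureReal_preimage hABm.nullMeasurableSet,
    (measurePreserving_nsmul hd0).measureReal_preimage hAm.nullMeasurableSet, hdq]
  exact measureReal_approxSet_inter_le_of_coprime hq'0 hqr g h a hb

end Circle

section Torus

variable {ι : Type*} [Fintype ι]

lemma measureReal_approxSet_torus [Nonempty ι] {q : ℕ} (hq : q ≠ 0) (g : UnitAddTorus ι) {a : ℝ}
    (ha : 0 ≤ a) : volume.real (approxSet q g a) = min 1 (2 * a) ^ Fintype.card ι := by
  rw [approxSet_pi, measureReal_def, volume_pi_pi, ENNReal.toReal_prod]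
  simp only [← measureReal_def, measureReal_approxSet hq _ ha, Finset.prod_const, Finset.card_univ]

lemma measureReal_approxSet_inter_le_torus [Nontrivial ι] {q : ℕ} (hq : q ≠ 0) (r : ℕ)
    (g h : UnitAddTorus ι) {a b : ℝ} (ha : 0 ≤ a) (hb : 0 ≤ b) :
    volume.real (approxSet q g a ∩ approxSet r h b) ≤
      2 ^ (Fintype.card ι - 1) * volume.real (approxSet q g a) *
        (min 1 (2 * b) ^ Fintype.card ι + ((q.gcd r : ℝ) / q) ^ 2) := by
  have hgcd : (q.gcd r : ℝ) / q ≤ 1 :=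
    div_le_one_of_le₀ (Nat.cast_le.mpr (Nat.gcd_le_left r hq.bot_lt)) q.cast_nonneg
  have hprod : volume.real (approxSet q g a ∩ approxSet r h b) =
      ∏ i, volume.real (approxSet q (g i) a ∩ approxSet r (h i) b) := by
    rw [approxSet_pi, approxSet_pi, ← Set.pi_inter_distrib, measureReal_def, volume_pi_pi,
      ENNReal.toReal_prod]
    rfl
  calc volume.real (approxSet q g a ∩ approxSet r h b)
      ≤ ∏ i, volume.real (approxSet q (g i) a) * (min 1 (2 * b) + (q.gcd r : ℝ) / q) :=
        hprod.trans_le <| Finset.prod_le_prod (fun _ _ ↦ measureReal_nonneg) fun i _ ↦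
          measureReal_approxSet_inter_le hq r (g i) (h i) a hb
    _ = volume.real (approxSet q g a) *
        (min 1 (2 * b) + (q.gcd r : ℝ) / q) ^ Fintype.card ι := by
        simp only [measureReal_approxSet_torus hq g ha, measureReal_approxSet hq _ ha,
          Finset.prod_const, Finset.card_univ, mul_pow]
    _ ≤ volume.real (approxSet q g a) * (2 ^ (Fintype.card ι - 1) *
        (min 1 (2 * b) ^ Fintype.card ι + ((q.gcd r : ℝ) / q) ^ Fintype.card ι)) := by
        gcongr
        exact add_pow_le (by positivity) (by positivity) _
    _ ≤ volume.real (approxSet q g a) * (2 ^ (Fintype.card ι - 1) *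
        (min 1 (2 * b) ^ Fintype.card ι + ((q.gcd r : ℝ) / q) ^ 2)) := by
        gcongr ?_ * (_ * (_ + ?_))
        exact pow_le_pow_of_le_one (by positivity) hgcd Fintype.one_lt_card
    _ = _ := by ring

lemma mFourier_add_single [DecidableEq ι] (n : ι → ℤ) (x : UnitAddTorus ι) (i : ι)
    (t : UnitAddCircle) :
    UnitAddTorus.mFourier n (x + Pi.single i t) =
      fourier (n i) t * UnitAddTorus.mFourier n x := by
  have hprod : ∏ j, ((n j • (Pi.single i t : UnitAddTorus ι) j).toCircle : ℂ) =
      (n i • t).toCircle := by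
    rw [Finset.prod_eq_single i (fun j _ hj ↦ by simp [hj]) (by simp), Pi.single_eq_same]
  simp only [UnitAddTorus.mFourier, ContinuousMap.coe_mk, fourier_apply, Pi.add_apply, smul_add,
    AddCircle.toCircle_add, Circle.coe_mul, Finset.prod_mul_distrib, hprod]
  ring

lemma fourier_inv_ne_one {q : ℕ} (hq : q ≠ 0) {n : ℤ} (hn : ¬(q : ℤ) ∣ n) :
    fourier n (((q : ℝ)⁻¹ : ℝ) : UnitAddCircle) ≠ 1 := by
  have hn0 : n • (((q : ℝ)⁻¹ : ℝ) : UnitAddCircle) ≠ 0 := by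
    rwa [Ne, ← addOrderOf_dvd_iff_zsmul_eq_zero, ← one_div,
      AddCircle.addOrderOf_period_div hq.bot_lt]
  rw [fourier_apply, ← Circle.coe_one, Ne, Circle.coe_inj, ← AddCircle.toCircle_zero]
  exact (AddCircle.injective_toCircle one_ne_zero).ne hn0

lemma setIntegral_mFourier_eq_zero [DecidableEq ι] {n : ι → ℤ} {i : ι} {q : ℕ} (hq : q ≠ 0)
    (hn : ¬(q : ℤ) ∣ n i) {E : Set (UnitAddTorus ι)}
    (hE : ∀ x, x + Pi.single i (((q : ℝ)⁻¹ : ℝ) : UnitAddCircle) ∈ E ↔ x ∈ E) :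
    ∫ x in E, UnitAddTorus.mFourier n x = 0 :=
  setIntegral_eq_zero_of_add_right hE (fourier_inv_ne_one hq hn) fun x ↦ mFourier_add_single n x i _

lemma eventually_setIntegral_mFourier_approxSet (g : ℕ → UnitAddTorus ι) (a : ℕ → ℝ)
    (n : ι → ℤ) :
    ∀ᶠ q in atTop, ∫ x in approxSet q (g q) (a q), UnitAddTorus.mFourier n x =
      volume.real (approxSet q (g q) (a q)) * ∫ x, UnitAddTorus.mFourier n x := by
  classical
  rcases eq_or_ne n 0 with rfl | hn
  · have huniv : volume.real (Set.univ : Set (UnitAddTorus ι)) = 1 := by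
      rw [measureReal_def, ← Set.pi_univ Set.univ, volume_pi_pi]
      simp
    simp [UnitAddTorus.mFourier_zero, huniv]
  obtain ⟨i, hi⟩ := Function.ne_iff.mp hn
  filter_upwards [eventually_gt_atTop (n i).natAbs] with q hq
  have hq0 : q ≠ 0 := (Nat.zero_le _).trans_lt hq |>.ne'
  have hdvd : ¬(q : ℤ) ∣ n i := fun h ↦
    hi (Int.eq_zero_of_abs_lt_dvd h (by rw [Int.abs_eq_natAbs]; exact_mod_cast hq))
  have htors : q • (Pi.single i (((q : ℝ)⁻¹ : ℝ) : UnitAddCircle) : UnitAddTorus ι) = 0 := by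
    rw [← Pi.single_smul, ← AddCircle.coe_nsmul, nsmul_eq_mul,
      mul_inv_cancel₀ (Nat.cast_ne_zero.mpr hq0), AddCircle.coe_period, Pi.single_zero]
  rw [setIntegral_mFourier_eq_zero hq0 hdvd fun x ↦ add_mem_approxSet_iff htors _ x _,
    ← setIntegral_univ, setIntegral_mFourier_eq_zero hq0 hdvd fun _ ↦ Iff.rfl, mul_zero]

lemma span_toLp_mFourier_closure_eq_top :
    (Submodule.span ℂ (Set.range fun n : ι → ℤ ↦ ContinuousMap.toLp (E := ℂ) 2
      (volume : Measure (UnitAddTorus ι)) ℂ (UnitAddTorus.mFourier n))).topologicalClosure = ⊤ := by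
  simpa only [Submodule.map_span, ContinuousLinearMap.coe_coe, ← Set.range_comp,
    Function.comp_def] using
    (ContinuousMap.toLp_denseRange ℂ (volume : Measure (UnitAddTorus ι)) ℂ
      (ENNReal.ofNat_ne_top (n := 2))).topologicalClosure_map_submodule
      UnitAddTorus.span_mFourier_closure_eq_top

end Torus

section Main

variable {ι : Type*} [Fintype ι]

lemma sum_sum_measureReal_approxSet_inter_le [Nontrivial ι] (g : ℕ → UnitAddTorus ι) {a : ℕ → ℝ}
    (ha : 0 ≤ a) (n : ℕ) :
    ∑ q ∈ Finset.range n, ∑ r ∈ Finset.range n,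
      ((q.totient : ℝ) / q) ^ Fintype.card ι * ((r.totient : ℝ) / r) ^ Fintype.card ι *
        volume.real (approxSet q (g q) (a q) ∩ approxSet r (g r) (a r)) ≤
      2 * 2 ^ (Fintype.card ι - 1) *
        (1 + ∑ q ∈ Finset.range n, ((q.totient : ℝ) / q) ^ Fintype.card ι *
          volume.real (approxSet q (g q) (a q))) ^ 2 := by
  refine sum_sum_le_of_le_mul_add (κ := fun q r ↦ (r.totient : ℝ) / r * ((q.gcd r : ℝ) / q) ^ 2)
    (by positivity) (fun q ↦ by positivity) (fun q r ↦ by positivity)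
    (fun q r ↦ by rw [Set.inter_comm]; ring) (fun q r _ ↦ ?_) sum_totient_mul_gcd_sq_le_one n
  rcases eq_or_ne q 0 with rfl | hq
  · simp
  rcases eq_or_ne r 0 with rfl | hr
  · simp
  set w : ℕ → ℝ := fun q ↦ ((q.totient : ℝ) / q) ^ Fintype.card ι
  have hw : ∀ q, 0 ≤ w q := fun q ↦ by positivity
  have hw_le : w r ≤ (r.totient : ℝ) / r :=
    pow_le_of_le_one (by positivity) (totient_div_self_le_one r) Fintype.card_ne_zero
  calc w q * w r * volume.real (approxSet q (g q) (a q) ∩ approxSet r (g r) (a r))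
      ≤ w q * w r * (2 ^ (Fintype.card ι - 1) * volume.real (approxSet q (g q) (a q)) *
        (min 1 (2 * a r) ^ Fintype.card ι + ((q.gcd r : ℝ) / q) ^ 2)) := by
        have := mul_nonneg (hw q) (hw r)
        gcongr
        exact measureReal_approxSet_inter_le_torus hq r (g q) (g r) (ha q) (ha r)
    _ = 2 ^ (Fintype.card ι - 1) * (w q * volume.real (approxSet q (g q) (a q))) *
        (w r * volume.real (approxSet r (g r) (a r)) + w r * ((q.gcd r : ℝ) / q) ^ 2) := by
        rw [measureReal_approxSet_torus hr (g r) (ha r)]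
        ring
    _ ≤ 2 ^ (Fintype.card ι - 1) * (w q * volume.real (approxSet q (g q) (a q))) *
        (w r * volume.real (approxSet r (g r) (a r)) +
          (r.totient : ℝ) / r * ((q.gcd r : ℝ) / q) ^ 2) := by
        have := hw q
        gcongr

theorem ae_frequently_mem_approxSet [Nontrivial ι] (g : ℕ → UnitAddTorus ι) {a : ℕ → ℝ}
    (ha : 0 ≤ a) (hdiv : ¬Summable fun q ↦
      ((q.totient : ℝ) / q) ^ Fintype.card ι * volume.real (approxSet q (g q) (a q))) :
    ∀ᵐ x, ∃ᶠ q in atTop, x ∈ approxSet q (g q) (a q) := by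
  refine ae_frequently_mem_of_sum_inter_le (fun q ↦ measurableSet_approxSet q (g q) (a q))
    (fun q ↦ by positivity)
    ((not_summable_iff_tendsto_nat_atTop_of_nonneg fun q ↦ by positivity).mp hdiv)
    (sum_sum_measureReal_approxSet_inter_le g ha) span_toLp_mFourier_closure_eq_top ?_
  rintro _ ⟨n, rfl⟩
  have hcoe := ContinuousMap.coeFn_toLp (p := 2) (𝕜 := ℂ) (volume : Measure (UnitAddTorus ι))
    (UnitAddTorus.mFourier n)
  filter_upwards [eventually_setIntegral_mFourier_approxSet g a n] with q hq
  rw [integral_congr_ae (ae_restrict_of_ae hcoe), integral_congr_ae hcoe]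
  exact hq

theorem ae_frequently_mem_approxSet_of_not_summable [Nontrivial ι] (g : ℕ → UnitAddTorus ι)
    {ψ : ℕ → ℝ} (hψ : 0 ≤ ψ)
    (hdiv : ¬Summable fun q ↦ (ψ q * q.totient / q) ^ Fintype.card ι) :
    ∀ᵐ x, ∃ᶠ q in atTop, x ∈ approxSet q (g q) (ψ q) := by
  by_cases hbig : ∃ᶠ q in atTop, 1 / 2 ≤ ψ q
  · refine .of_forall fun x ↦ hbig.mono fun q hq ↦ (dist_pi_le_iff (hψ q)).mpr fun i ↦ ?_
    rw [dist_eq_norm]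
    simpa using (AddCircle.norm_le_half_period (1 : ℝ) one_ne_zero).trans (by simpa using hq)
  · refine ae_frequently_mem_approxSet g hψ fun hsum ↦ hdiv ?_
    refine (summable_mul_left_iff (pow_ne_zero (Fintype.card ι) two_ne_zero)).mp
      ((summable_congr_atTop ?_).mp hsum)
    filter_upwards [not_frequently.mp hbig, eventually_ne_atTop 0] with q hq hq0
    rw [measureReal_approxSet_torus hq0 (g q) (hψ q), min_eq_right (by linarith)]
    ring

lemma ae_comp_coe_of_ae_unitAddTorus {p : UnitAddTorus ι → Prop} (hp : ∀ᵐ x, p x) :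
    ∀ᵐ x : ι → ℝ, p fun i ↦ x i := by
  have hcover : ⋃ k : ι → ℤ, Set.univ.pi (fun i ↦ Set.Ioc (k i : ℝ) (k i + 1)) = Set.univ := by
    refine Set.eq_univ_of_forall fun x ↦ Set.mem_iUnion.mpr ⟨fun i ↦ ⌈x i⌉ - 1, fun i _ ↦ ?_⟩
    push_cast
    constructor <;> linarith [Int.ceil_lt_add_one (x i), Int.le_ceil (x i)]
  rw [← Measure.restrict_univ (μ := (volume : Measure (ι → ℝ))), ← hcover, ae_restrict_iUnion_iff]
  intro k
  rw [volume_pi, Measure.restrict_pi_pi]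
  exact (measurePreserving_pi _ _ fun i ↦
    UnitAddCircle.measurePreserving_mk (k i)).quasiMeasurePreserving.ae hp

lemma dnint_sub_eq_dist (q : ℕ) (x γ : ℝ) :
    dnint (q * x - γ) = dist (q • (x : UnitAddCircle)) γ := by
  rw [dist_eq_norm, ← AddCircle.coe_nsmul, ← AddCircle.coe_sub, nsmul_eq_mul, UnitAddCircle.norm_eq,
    dnint]

theorem stmt5_general [Nontrivial ι] (γ : ℕ → ι → ℝ) (ψ : ℕ → ℝ) (hψ0 : ∀ q, 0 ≤ ψ q)
    (hdiv : Tendsto (fun Q : ℕ ↦ ∑ q ∈ Finset.Icc 1 Q, (ψ q * q.totient / q) ^ Fintype.card ι)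
      atTop atTop) :
    ∀ᵐ x : ι → ℝ, {q : ℕ | 0 < q ∧ ∀ i, dnint (q * x i - γ q i) ≤ ψ q}.Infinite := by
  have hns : ¬Summable fun q ↦ (ψ q * q.totient / q) ^ Fintype.card ι := fun hsum ↦ by
    obtain ⟨Q, hQ⟩ := (hdiv.eventually_gt_atTop _).exists
    exact hQ.not_ge (hsum.sum_le_tsum _ fun q _ ↦
      pow_nonneg (div_nonneg (mul_nonneg (hψ0 q) (Nat.cast_nonneg _)) (Nat.cast_nonneg _)) _)
  filter_upwards [ae_comp_coe_of_ae_unitAddTorus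
    (ae_frequently_mem_approxSet_of_not_summable (fun q i ↦ (γ q i : UnitAddCircle)) hψ0 hns)]
    with x hx
  refine Nat.frequently_atTop_iff_infinite.mp
    ((hx.and_eventually (eventually_gt_atTop 0)).mono fun q hq ↦ ⟨hq.2, fun i ↦ ?_⟩)
  rw [dnint_sub_eq_dist]
  exact (dist_pi_le_iff (hψ0 q)).mp hq.1 i

end Main

lemma volume_unitSquare_inter_eq_one_of_ae {p : (Fin 2 → ℝ) → Prop} (hp : ∀ᵐ x, p x) :
    volume {x : ℝ × ℝ | x.1 ∈ Set.Icc (0 : ℝ) 1 ∧ x.2 ∈ Set.Icc (0 : ℝ) 1 ∧ p ![x.1, x.2]} = 1 := by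
  have hae : ∀ᵐ x : ℝ × ℝ, p ![x.1, x.2] :=
    ((volume_preserving_finTwoArrow ℝ).symm _).quasiMeasurePreserving.ae hp
  calc volume {x : ℝ × ℝ | x.1 ∈ Set.Icc (0 : ℝ) 1 ∧ x.2 ∈ Set.Icc (0 : ℝ) 1 ∧ p ![x.1, x.2]}
      = volume (Set.Icc (0 : ℝ) 1 ×ˢ Set.Icc (0 : ℝ) 1) := by
        refine measure_congr ?_
        filter_upwards [hae] with x hx
        exact propext ⟨fun h ↦ ⟨h.1, h.2.1⟩, fun h ↦ ⟨h.1, h.2, hx⟩⟩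
    _ = 1 := by
        rw [Measure.volume_eq_prod, Measure.prod_prod]
        simp

theorem stmt5 (γ₁ γ₂ : ℝ) (ψ : ℕ → ℝ) (hψ0 : ∀ q, 0 ≤ ψ q)
    (hdiv : Tendsto (fun Q : ℕ =>
      ∑ q ∈ Finset.Icc 1 Q, (ψ q * Nat.totient q / q) ^ 2) atTop atTop) :
    volume {x : ℝ × ℝ | x.1 ∈ Set.Icc (0:ℝ) 1 ∧ x.2 ∈ Set.Icc (0:ℝ) 1 ∧
      {q : ℕ | 0 < q ∧ max (dnint (q * x.1 - γ₁)) (dnint (q * x.2 - γ₂)) ≤ ψ q}.Infinite}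
      = 1 := by
  simpa [Fin.forall_fin_two] using volume_unitSquare_inter_eq_one_of_ae
    (stmt5_general (fun _ ↦ ![γ₁, γ₂]) ψ hψ0 (by simpa using hdiv))
end

section
/- Let H > 2 be an integer, let ψ be an approximation function with 0 < ψ(q) < 1/2 for all q, and let γ be an irrational number. For integers 1 ≤ q′ < q with Δ(q,q′) < H·gcd(q,q′), one has |A_q ∩ A_{q′}| ≤ 2(2H+1) · min{ψ(q)/q, ψ(q′)/q′} · gcd(q,q′) if ‖γ(q − q′)/gcd(q,q′)‖ ≤ Δ(q,q′)/gcd(q,q′), and |A_q ∩ A_{q′}| = 0 otherwise. -/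
open MeasureTheory Filter Real

/-- `A_q = {x ∈ [0,1] : ‖qx - γ‖ < ψ(q)}`. -/
noncomputable def Aset (ψ : ℕ → ℝ) (γ : ℝ) (q : ℕ) : Set ℝ :=
  {x ∈ Set.Icc (0:ℝ) 1 | dnint (q * x - γ) < ψ q}

/-- `Δ(q,q') = qψ(q') + q'ψ(q)`. -/
noncomputable def Δfun (ψ : ℕ → ℝ) (q q' : ℕ) : ℝ := q * ψ q' + q' * ψ q

open Metric

/-!
Let `x` satisfy `‖qx - γ‖ < ψ(q)` and `‖q'x - γ'‖ < ψ(q')`, let `p` and `p'` be the integers nearest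
to `qx - γ` and `q'x - γ'`, and put `d = gcd (q, q')`. The integer `qp' - q'p` is a multiple `dm` of
`d`, and eliminating `x` shows that `(qγ' - q'γ) / d + m` is smaller than `Δ(q,q') / d` in absolute
value. So no `m` is available when `Δ(q,q') / d < ‖(qγ' - q'γ) / d‖`, and at most `2H + 1` are when
`Δ(q,q') ≤ Hd`.

For fixed `m`, Bézout's identity `d = qa + q'b` turns `qp' - q'p = dm` into
`dp / q = (ap + bp') - dmb / q`, so that `p` drops out modulo `1`: the point `dx` is within
`(d / q) ψ(q)` of `d (γ - mb) / q` modulo `1`. As multiplication by `d` preserves the measure of the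
circle, such `x` have measure at most `2 (d / q) ψ(q)`, and the same holds with `q` and `q'`
exchanged.
-/

lemma dnint_eq_norm (x : ℝ) : dnint x = ‖(x : UnitAddCircle)‖ :=
  UnitAddCircle.norm_eq.symm

lemma dnint_le_abs_sub_intCast (x : ℝ) (n : ℤ) : dnint x ≤ |x - n| :=
  round_le x n

lemma volume_Aset_le (ψ : ℕ → ℝ) (γ : ℝ) {q : ℕ} (hq : 0 < q) :
    volume (Aset ψ γ q) ≤ ENNReal.ofReal (2 * ψ q) := by
  let f : ℝ → UnitAddCircle := fun x ↦ (q : ℤ) • (x : UnitAddCircle)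
  have hf : MeasurePreserving f (volume.restrict (Set.Icc 0 1)) := by
    have hmk := UnitAddCircle.measurePreserving_mk 0
    rw [zero_add, Measure.restrict_congr_set Ioc_ae_eq_Icc] at hmk
    exact (Measure.measurePreserving_zsmul volume (Nat.cast_ne_zero.2 hq.ne')).comp hmk
  have hsub : Aset ψ γ q ⊆ f ⁻¹' closedBall (γ : UnitAddCircle) (ψ q) ∩ Set.Icc 0 1 := by
    rintro x ⟨hx, hxψ⟩
    refine ⟨?_, hx⟩
    have hfx : f x - (γ : UnitAddCircle) = ((q * x - γ : ℝ) : UnitAddCircle) := by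
      simp only [f, natCast_zsmul, ← nsmul_eq_mul, AddCircle.coe_sub, AddCircle.coe_nsmul]
    rw [Set.mem_preimage, mem_closedBall_iff_norm, hfx, ← dnint_eq_norm]
    exact hxψ.le
  calc volume (Aset ψ γ q)
      ≤ volume (f ⁻¹' closedBall (γ : UnitAddCircle) (ψ q) ∩ Set.Icc 0 1) :=
        measure_mono hsub
    _ = volume (closedBall (γ : UnitAddCircle) (ψ q)) := by
        rw [← Measure.restrict_apply' measurableSet_Icc,
          hf.measure_preimage isClosed_closedBall.nullMeasurableSet]
    _ ≤ ENNReal.ofReal (2 * ψ q) := by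
        rw [AddCircle.volume_closedBall]
        exact ENNReal.ofReal_le_ofReal (min_le_right _ _)

lemma card_Icc_ceil_floor_le {a b : ℝ} (hab : a ≤ b) :
    ((Finset.Icc ⌈a⌉ ⌊b⌋).card : ℝ) ≤ b - a + 1 := by
  have hnonneg : 0 ≤ ⌊b⌋ + 1 - ⌈a⌉ := by
    have : ⌈a⌉ ≤ ⌊b⌋ + 1 := Int.ceil_le.2 (by push_cast; linarith [Int.lt_floor_add_one b])
    linarith
  have hcard : ((Finset.Icc ⌈a⌉ ⌊b⌋).card : ℤ) = ⌊b⌋ + 1 - ⌈a⌉ := by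
    rw [Int.card_Icc, Int.toNat_of_nonneg hnonneg]
  have hcard' : ((Finset.Icc ⌈a⌉ ⌊b⌋).card : ℝ) = ⌊b⌋ + 1 - ⌈a⌉ := by exact_mod_cast hcard
  linarith [Int.floor_le b, Int.le_ceil a]

lemma abs_cross_lt {q q' s s' u u' : ℝ} (hq : 0 < q) (hq' : 0 < q') (hu : |u| < s)
    (hu' : |u'| < s') : |q' * u - q * u'| < q * s' + q' * s :=
  calc |q' * u - q * u'| ≤ |q' * u| + |q * u'| := abs_sub _ _
    _ = q' * |u| + q * |u'| := by rw [abs_mul, abs_mul, abs_of_pos hq, abs_of_pos hq']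
    _ < q * s' + q' * s := by rw [add_comm]; gcongr

/-- The points `x` of `[0,1]` that satisfy `|qx - γ - p| < s` and `|q'x - γ' - p'| < s'` for some
integers `p`, `p'` with `qp' - q'p = gcd (q, q') * m`. The intersection of `A_q` and `A_{q'}` is
estimated by cutting it into these pieces. -/
def crossSlice (γ γ' s s' : ℝ) (q q' : ℕ) (m : ℤ) : Set ℝ :=
  {x ∈ Set.Icc (0 : ℝ) 1 | ∃ p p' : ℤ, (q * p' - q' * p : ℤ) = Nat.gcd q q' * m ∧
    |q * x - γ - p| < s ∧ |q' * x - γ' - p'| < s'}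

section crossSlice

variable (γ γ' s s' : ℝ) {q q' : ℕ} (m : ℤ)

lemma crossSlice_comm : crossSlice γ γ' s s' q q' m = crossSlice γ' γ s' s q' q (-m) := by
  have hswap : ∀ p p' : ℤ, (q * p' - q' * p : ℤ) = Nat.gcd q q' * m ↔
      (q' * p - q * p' : ℤ) = Nat.gcd q' q * -m := fun p p' ↦ by
    rw [Nat.gcd_comm q' q]
    constructor <;> intro h <;> linear_combination -h
  ext x
  simp only [crossSlice, Set.mem_ofPred_eq, hswap]
  rw [exists_comm]
  simp only [and_comm (a := |(q : ℝ) * x - γ - _| < s)]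

lemma gcd_mul_div_eq_of_cross_eq (hq : 0 < q) {p p' : ℤ}
    (h : (q * p' - q' * p : ℤ) = Nat.gcd q q' * m) :
    (Nat.gcd q q' * p / q : ℝ) =
      (Nat.gcdA q q' * p + Nat.gcdB q q' * p' : ℤ) - Nat.gcd q q' * (m * Nat.gcdB q q') / q := by
  have hq0 : (q : ℝ) ≠ 0 := by positivity
  have hbezout : (Nat.gcd q q' : ℝ) = q * Nat.gcdA q q' + q' * Nat.gcdB q q' := by
    exact_mod_cast Nat.gcd_eq_gcd_ab q q'
  have hcross : (q * p' - q' * p : ℝ) = Nat.gcd q q' * m := by exact_mod_cast h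
  rw [eq_sub_iff_add_eq, ← add_div, div_eq_iff hq0]
  push_cast
  linear_combination p * hbezout - Nat.gcdB q q' * hcross

lemma crossSlice_subset_Aset (hq : 0 < q) :
    crossSlice γ γ' s s' q q' m ⊆
      Aset (fun n ↦ n * (s / q)) (Nat.gcd q q' * (γ - m * Nat.gcdB q q') / q) (Nat.gcd q q') := by
  rintro x ⟨hx, p, p', hcross, hp, -⟩
  refine ⟨hx, ?_⟩
  have hq0 : (0 : ℝ) < q := by exact_mod_cast hq
  have hd : (0 : ℝ) < Nat.gcd q q' := by exact_mod_cast Nat.gcd_pos_of_pos_left q' hq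
  set k : ℤ := Nat.gcdA q q' * p + Nat.gcdB q q' * p'
  have hk : (Nat.gcd q q' * p / q : ℝ) = k - Nat.gcd q q' * (m * Nat.gcdB q q') / q :=
    gcd_mul_div_eq_of_cross_eq m hq hcross
  calc dnint (Nat.gcd q q' * x - Nat.gcd q q' * (γ - m * Nat.gcdB q q') / q)
      ≤ |Nat.gcd q q' * x - Nat.gcd q q' * (γ - m * Nat.gcdB q q') / q - k| :=
        dnint_le_abs_sub_intCast _ k
    _ = |Nat.gcd q q' * ((q * x - γ - p) / q)| := by
        congr 1
        have hx_eq : x = q * x / q := by field_simp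
        linear_combination Nat.gcd q q' * hx_eq + hk
    _ = Nat.gcd q q' * (|q * x - γ - p| / q) := by
        rw [abs_mul, abs_div, abs_of_pos hd, abs_of_pos hq0]
    _ < Nat.gcd q q' * (s / q) := by gcongr

lemma volume_crossSlice_le_left (hq : 0 < q) :
    volume (crossSlice γ γ' s s' q q' m) ≤ ENNReal.ofReal (2 * (Nat.gcd q q' * (s / q))) :=
  (measure_mono (crossSlice_subset_Aset γ γ' s s' m hq)).trans
    (volume_Aset_le _ _ (Nat.gcd_pos_of_pos_left q' hq))

lemma volume_crossSlice_le (hq : 0 < q) (hq' : 0 < q') :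
    volume (crossSlice γ γ' s s' q q' m) ≤
      ENNReal.ofReal (2 * (Nat.gcd q q' * min (s / q) (s' / q'))) := by
  rcases min_choice (s / q) (s' / q') with hmin | hmin <;> rw [hmin]
  · exact volume_crossSlice_le_left γ γ' s s' m hq
  · rw [crossSlice_comm, Nat.gcd_comm]
    exact volume_crossSlice_le_left γ' γ s' s (-m) hq'

end crossSlice

section Aset

variable (ψ : ℕ → ℝ) (γ γ' : ℝ) {q q' : ℕ}

lemma exists_mem_crossSlice_of_mem_Aset (hq : 0 < q) (hq' : 0 < q') {x : ℝ}
    (hx : x ∈ Aset ψ γ q) (hx' : x ∈ Aset ψ γ' q') :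
    ∃ m : ℤ, |(q * γ' - q' * γ) / Nat.gcd q q' + m| < Δfun ψ q q' / Nat.gcd q q' ∧
      x ∈ crossSlice γ γ' (ψ q) (ψ q') q q' m := by
  set p := round (q * x - γ)
  set p' := round (q' * x - γ')
  have hp : |q * x - γ - p| < ψ q := hx.2
  have hp' : |q' * x - γ' - p'| < ψ q' := hx'.2
  obtain ⟨m, hm⟩ : (Nat.gcd q q' : ℤ) ∣ q * p' - q' * p :=
    dvd_sub ((Int.natCast_dvd_natCast.2 (Nat.gcd_dvd_left q q')).mul_right _)
      ((Int.natCast_dvd_natCast.2 (Nat.gcd_dvd_right q q')).mul_right _)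
  refine ⟨m, ?_, hx.1, p, p', hm, hp, hp'⟩
  have hd : (0 : ℝ) < Nat.gcd q q' := by exact_mod_cast Nat.gcd_pos_of_pos_left q' hq
  have hmR : (q * p' - q' * p : ℝ) = Nat.gcd q q' * m := by exact_mod_cast hm
  have hcross : (q * γ' - q' * γ) / Nat.gcd q q' + m =
      (q' * (q * x - γ - p) - q * (q' * x - γ' - p')) / Nat.gcd q q' := by
    rw [div_add' _ _ _ hd.ne']
    congr 1
    linear_combination -hmR
  rw [hcross, abs_div, abs_of_pos hd]
  gcongr
  exact abs_cross_lt (by exact_mod_cast hq) (by exact_mod_cast hq') hp hp'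

lemma volume_Aset_inter_Aset_le_card_mul (hq : 0 < q) (hq' : 0 < q') {S : Finset ℤ}
    (hS : ∀ m : ℤ, |(q * γ' - q' * γ) / Nat.gcd q q' + m| < Δfun ψ q q' / Nat.gcd q q' → m ∈ S) :
    volume (Aset ψ γ q ∩ Aset ψ γ' q') ≤
      S.card * ENNReal.ofReal (2 * (Nat.gcd q q' * min (ψ q / q) (ψ q' / q'))) := by
  have hcover : Aset ψ γ q ∩ Aset ψ γ' q' ⊆ ⋃ m ∈ S, crossSlice γ γ' (ψ q) (ψ q') q q' m := by
    rintro x ⟨hx, hx'⟩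
    obtain ⟨m, hm, hxm⟩ := exists_mem_crossSlice_of_mem_Aset ψ γ γ' hq hq' hx hx'
    exact Set.mem_biUnion (hS m hm) hxm
  calc volume (Aset ψ γ q ∩ Aset ψ γ' q')
      ≤ ∑ m ∈ S, volume (crossSlice γ γ' (ψ q) (ψ q') q q' m) :=
        (measure_mono hcover).trans (measure_biUnion_finset_le _ _)
    _ ≤ S.card • ENNReal.ofReal (2 * (Nat.gcd q q' * min (ψ q / q) (ψ q' / q'))) :=
        Finset.sum_le_card_nsmul _ _ _ fun m _ ↦ volume_crossSlice_le _ _ _ _ m hq hq'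
    _ = S.card * ENNReal.ofReal (2 * (Nat.gcd q q' * min (ψ q / q) (ψ q' / q'))) :=
        nsmul_eq_mul _ _

lemma volume_Aset_inter_Aset_le (hq : 0 < q) (hq' : 0 < q') {H : ℝ} (hH : 0 ≤ H)
    (hΔ : Δfun ψ q q' ≤ H * Nat.gcd q q') :
    volume (Aset ψ γ q ∩ Aset ψ γ' q') ≤
      ENNReal.ofReal (2 * (2 * H + 1) * min (ψ q / q) (ψ q' / q') * Nat.gcd q q') := by
  have hd : (0 : ℝ) < Nat.gcd q q' := by exact_mod_cast Nat.gcd_pos_of_pos_left q' hq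
  set β := (q * γ' - q' * γ) / Nat.gcd q q'
  set S := Finset.Icc ⌈-β - H⌉ ⌊-β + H⌋
  have hS : ∀ m : ℤ, |β + m| < Δfun ψ q q' / Nat.gcd q q' → m ∈ S := fun m hm ↦ by
    obtain ⟨hlo, hhi⟩ := abs_lt.1 (hm.trans_le ((div_le_iff₀ hd).2 hΔ))
    exact Finset.mem_Icc.2 ⟨Int.ceil_le.2 (by linarith), Int.le_floor.2 (by linarith)⟩
  have hcard : (S.card : ℝ) ≤ 2 * H + 1 := by
    have := card_Icc_ceil_floor_le (show -β - H ≤ -β + H by linarith)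
    linarith
  calc volume (Aset ψ γ q ∩ Aset ψ γ' q')
      ≤ S.card * ENNReal.ofReal (2 * (Nat.gcd q q' * min (ψ q / q) (ψ q' / q'))) :=
        volume_Aset_inter_Aset_le_card_mul ψ γ γ' hq hq' hS
    _ ≤ ENNReal.ofReal (2 * H + 1) *
          ENNReal.ofReal (2 * (Nat.gcd q q' * min (ψ q / q) (ψ q' / q'))) := by
        gcongr
        rw [← ENNReal.ofReal_natCast]
        exact ENNReal.ofReal_le_ofReal hcard
    _ = ENNReal.ofReal (2 * (2 * H + 1) * min (ψ q / q) (ψ q' / q') * Nat.gcd q q') := by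
        rw [← ENNReal.ofReal_mul (by positivity)]
        ring_nf

lemma volume_Aset_inter_Aset_eq_zero (hq : 0 < q) (hq' : 0 < q')
    (h : Δfun ψ q q' / Nat.gcd q q' < dnint ((q * γ' - q' * γ) / Nat.gcd q q')) :
    volume (Aset ψ γ q ∩ Aset ψ γ' q') = 0 := by
  have hno : ∀ m : ℤ, |(q * γ' - q' * γ) / Nat.gcd q q' + m| < Δfun ψ q q' / Nat.gcd q q' →
      m ∈ (∅ : Finset ℤ) := fun m hm ↦ by
    have hround := dnint_le_abs_sub_intCast ((q * γ' - q' * γ) / Nat.gcd q q') (-m)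
    rw [Int.cast_neg, sub_neg_eq_add] at hround
    exact absurd (h.trans_le hround) hm.not_gt
  simpa using volume_Aset_inter_Aset_le_card_mul ψ γ γ' hq hq' hno

end Aset

theorem stmt7_general (ψ : ℕ → ℝ) (γ γ' : ℝ) {q q' : ℕ} (hq : 0 < q) (hq' : 0 < q') {H : ℝ}
    (hH : 0 ≤ H) (hΔ : Δfun ψ q q' ≤ H * Nat.gcd q q') :
    volume (Aset ψ γ q ∩ Aset ψ γ' q') ≤
        ENNReal.ofReal (2 * (2 * H + 1) * min (ψ q / q) (ψ q' / q') * Nat.gcd q q') ∧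
      (Δfun ψ q q' / Nat.gcd q q' < dnint ((q * γ' - q' * γ) / Nat.gcd q q') →
        volume (Aset ψ γ q ∩ Aset ψ γ' q') = 0) :=
  ⟨volume_Aset_inter_Aset_le ψ γ γ' hq hq' hH hΔ, volume_Aset_inter_Aset_eq_zero ψ γ γ' hq hq'⟩

theorem stmt7 (H : ℕ) (hH : 2 < H)
    (ψ : ℕ → ℝ) (hψpos : ∀ q, 1 ≤ q → 0 < ψ q) (hψhalf : ∀ q, 1 ≤ q → ψ q < 1/2)
    (γ : ℝ) (hγ : Irrational γ)
    (q q' : ℕ) (hq' : 1 ≤ q') (hq'q : q' < q)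
    (hΔ : Δfun ψ q q' < H * Nat.gcd q q') :
    (dnint (γ * ((q : ℝ) - q') / (Nat.gcd q q' : ℝ)) ≤ Δfun ψ q q' / (Nat.gcd q q' : ℝ) →
      volume (Aset ψ γ q ∩ Aset ψ γ q') ≤
        ENNReal.ofReal (2 * (2 * H + 1) * min (ψ q / q) (ψ q' / q') * Nat.gcd q q')) ∧
    (Δfun ψ q q' / (Nat.gcd q q' : ℝ) < dnint (γ * ((q : ℝ) - q') / (Nat.gcd q q' : ℝ)) →
      volume (Aset ψ γ q ∩ Aset ψ γ q') = 0) := by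
  rw [show γ * ((q : ℝ) - q') = q * γ - q' * γ by ring]
  exact (stmt7_general ψ γ γ (by omega) hq' H.cast_nonneg hΔ.le).imp_left fun h _ ↦ h
end
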